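/- Let T be a rooted tree on the vertex set of a flow graph G that has the parent property, and let G' be the derived graph of G with respect to T. If P is a simple path from s to a vertex v in G, then there is a simple path from s to v in G' containing only vertices that lie on P. In particular, every vertex of G' is reachable from s in G', so G' is a flow graph with start vertex s. -/

import Mathlib

variable {V : Type*}

/-- `IsWalk A u v p`: `p` is a path from `u` to `v` in the digraph with arc
relation `A`, listing all of its vertices in order. -/
def IsWalk (A : V → V → Prop) (u v : V) (p : List V) : Prop :=
  p.Chain' A ∧ p.head? = some u ∧ p.getLast? = some v

/-- A flow graph: a directed graph with arc relation `A` and start vertex `s`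
such that every vertex is reachable from `s` and no arc enters `s`. -/
structure FlowGraph (V : Type*) where
  A : V → V → Prop
  s : V
  reach : ∀ v : V, ∃ p : List V, IsWalk A s v p
  no_enter : ∀ v : V, ¬ A v s

/-- `DomOn A s v w`: `v` lies on every path from `s` to `w` in the digraph with
arc relation `A`. -/
def DomOn (A : V → V → Prop) (s v w : V) : Prop :=
  ∀ p : List V, IsWalk A s w p → v ∈ p

/-- `v` dominates `w` in the flow graph `G`. -/
def FlowGraph.Dom (G : FlowGraph V) (v w : V) : Prop :=
  DomOn G.A G.s v w

/-- A rooted tree on vertex set `V`, given by a parent function: the root is a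
fixed point of the parent function, and iterating the parent function from any
vertex eventually reaches the root. -/
structure ParentTree (V : Type*) where
  parent : V → V
  root : V
  parent_root : parent root = root
  reaches_root : ∀ v : V, ∃ n : ℕ, parent^[n] v = root

/-- `T.Anc x y`: `x` is an ancestor of `y` in the rooted tree `T` (every vertex
is an ancestor of itself). -/
def ParentTree.Anc (T : ParentTree V) (x y : V) : Prop :=
  ∃ n : ℕ, T.parent^[n] y = x

/-- `T` has the parent property with respect to `G`: for every arc `(v, w)`,
the parent of `w` is an ancestor of `v` in `T`. -/
def ParentProperty (G : FlowGraph V) (T : ParentTree V) : Prop :=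
  ∀ v w : V, G.A v w → T.Anc (T.parent w) v

/-- The sibling property with respect to an arbitrary arc relation `A` with
start vertex `s`: no non-root vertex dominates a distinct vertex with the same
parent. -/
def SiblingPropertyOn (A : V → V → Prop) (s : V) (T : ParentTree V) : Prop :=
  ∀ v w : V, v ≠ T.root → w ≠ T.root → v ≠ w → T.parent v = T.parent w →
    ¬ DomOn A s v w

/-- `T` has the sibling property with respect to the flow graph `G`. -/
def SiblingProperty (G : FlowGraph V) (T : ParentTree V) : Prop :=
  SiblingPropertyOn G.A G.s T

/-- `T` is the dominator tree of the digraph with arc relation `A` and start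
vertex `s`: `T` is rooted at `s`, and the parent of every vertex `v ≠ s` is its
immediate dominator, i.e. a strict dominator of `v` that is dominated by every
strict dominator of `v`. -/
def IsDomTreeOn (A : V → V → Prop) (s : V) (T : ParentTree V) : Prop :=
  T.root = s ∧ ∀ v : V, v ≠ s →
    DomOn A s (T.parent v) v ∧ T.parent v ≠ v ∧
    ∀ u : V, DomOn A s u v → u ≠ v → DomOn A s u (T.parent v)

/-- `T` is the dominator tree of the flow graph `G`. -/
def IsDomTree (G : FlowGraph V) (T : ParentTree V) : Prop :=
  IsDomTreeOn G.A G.s T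

/-- `ord` is (the numbering of) a preorder of the rooted tree `T`: an injective
numbering of the vertices such that for every vertex `v` the descendants of `v`
are ordered consecutively, with `v` first. -/
def IsTreePreorder (T : ParentTree V) (ord : V → ℕ) : Prop :=
  Function.Injective ord ∧
  (∀ v x : V, T.Anc v x → ord v ≤ ord x) ∧
  (∀ v x y z : V, T.Anc v x → T.Anc v z → ord x ≤ ord y → ord y ≤ ord z →
    T.Anc v y)

/-- A preorder `ord` of `T` is low-high on the digraph with arc relation `A`
and start vertex `s`: for every `v ≠ s`, either `(t(v), v)` is an arc, or there
are arcs `(u, v)` and `(w, v)` with `u < v < w` in the order and `w` not a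
descendant of `v` in `T`. -/
def LowHighOn (A : V → V → Prop) (s : V) (T : ParentTree V) (ord : V → ℕ) :
    Prop :=
  IsTreePreorder T ord ∧
  ∀ v : V, v ≠ s → (A (T.parent v) v ∨
    ∃ u w : V, A u v ∧ A w v ∧ ord u < ord v ∧ ord v < ord w ∧ ¬ T.Anc v w)

/-- A low-high order of `T` on the flow graph `G`. -/
def LowHigh (G : FlowGraph V) (T : ParentTree V) (ord : V → ℕ) : Prop :=
  LowHighOn G.A G.s T ord

/-- `B` is (the arc relation of) a spanning tree of `G` rooted at `s`: a
subgraph of `G` in which no arc enters `s`, every vertex other than `s` has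
exactly one entering arc, and every vertex is reachable from `s`. -/
def IsSpanningTree (G : FlowGraph V) (B : V → V → Prop) : Prop :=
  (∀ u v : V, B u v → G.A u v) ∧
  (∀ v : V, ¬ B v G.s) ∧
  (∀ v : V, v ≠ G.s → ∃! u : V, B u v) ∧
  (∀ v : V, ∃ p : List V, IsWalk B G.s v p)

/-- Spanning trees `B` and `R` of `G` rooted at `s` are independent: for every
vertex `v`, the paths from `s` to `v` in `B` and in `R` have in common only
dominators of `v`. -/
def Independent (G : FlowGraph V) (B R : V → V → Prop) : Prop :=
  ∀ v : V, ∀ p q : List V, IsWalk B G.s v p → IsWalk R G.s v q →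
    ∀ x : V, x ∈ p → x ∈ q → G.Dom x v

/-- Spanning trees `B` and `R` of `G` rooted at `s` are strongly independent:
for every pair of vertices `v`, `w`, either the path from `s` to `v` in `B` and
the path from `s` to `w` in `R` have in common only common dominators of `v`
and `w`, or the same holds with the roles of `B` and `R` exchanged. -/
def StronglyIndependent (G : FlowGraph V) (B R : V → V → Prop) : Prop :=
  ∀ v w : V,
    (∀ p q : List V, IsWalk B G.s v p → IsWalk R G.s w q →
      ∀ x : V, x ∈ p → x ∈ q → G.Dom x v ∧ G.Dom x w) ∨
    (∀ p q : List V, IsWalk R G.s v p → IsWalk B G.s w q →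
      ∀ x : V, x ∈ p → x ∈ q → G.Dom x v ∧ G.Dom x w)

/-- `IsDerivedArcOf G T v b a`: `(a, b)` is the derived arc of the arc `(v, b)`
of `G` with respect to `T`: `b` is not an ancestor of `v` in `T`, and `a = v`
if `v` is the parent of `b`, while otherwise `a` is the sibling of `b` in `T`
that is an ancestor of `v`. -/
def IsDerivedArcOf (G : FlowGraph V) (T : ParentTree V) (v b a : V) : Prop :=
  G.A v b ∧ ¬ T.Anc b v ∧
    ((v = T.parent b ∧ a = v) ∨
     (v ≠ T.parent b ∧ a ≠ T.root ∧ T.parent a = T.parent b ∧ T.Anc a v))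

/-- The arc relation of the derived graph of `G` with respect to `T`. -/
def DerivedArc (G : FlowGraph V) (T : ParentTree V) (a b : V) : Prop :=
  ∃ v : V, IsDerivedArcOf G T v b a

/-- `S` is the vertex set of a strongly connected subgraph of the digraph with
arc relation `A`. -/
def StronglyConnectedSet (A : V → V → Prop) (S : Set V) : Prop :=
  S.Nonempty ∧ ∀ u ∈ S, ∀ v ∈ S, ∃ p : List V,
    IsWalk A u v p ∧ ∀ x ∈ p, x ∈ S

/-- `G` is reducible: every strongly connected subgraph has a single entry
vertex, i.e. a vertex of the subgraph contained in every path from `s` to a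
vertex of the subgraph. -/
def Reducible (G : FlowGraph V) : Prop :=
  ∀ S : Set V, StronglyConnectedSet G.A S →
    ∃ v ∈ S, ∀ u ∈ S, ∀ p : List V, IsWalk G.A G.s u p → v ∈ p

/-- A digraph is acyclic if it has no cycle (a path from a vertex to itself
with at least one arc). -/
def Acyclic (A : V → V → Prop) : Prop :=
  ¬ ∃ (v : V) (p : List V), IsWalk A v v p ∧ 2 ≤ p.length

/-- `IsHighWalk A ν u v p`: `p` is a high path from `u` to `v`: a path all of
whose vertices other than `u` and `v` are greater (in the numbering `ν`) than
both `u` and `v`. -/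
def IsHighWalk (A : V → V → Prop) (ν : V → ℕ) (u v : V) (p : List V) : Prop :=
  IsWalk A u v p ∧ ∀ x ∈ p, x ≠ u → x ≠ v → ν u < ν x ∧ ν v < ν x

/-!
For every walk `P` of `G` from `s` to `v`, each *ancestor* of `v`, and not only `v` itself, is
reachable from `s` in the derived graph inside `P`. This stronger claim survives an induction along
`P`: for a last arc `(u, w)`, the parent property makes every proper ancestor of `w` an ancestor
of `u`, while `w` itself is either an ancestor of `u` or the head of a derived arc whose tail is an
ancestor of `u`.
-/

/-- The arcs of the digraph `A` whose head lies in `S`. For a start vertex in `S`, reachability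
along these arcs is reachability in the subgraph of `A` induced by `S`; since no condition is put
on tails, inductions need not track that every tail lies in `S`. -/
def ArcInto (A : V → V → Prop) (S : Set V) (u v : V) : Prop :=
  A u v ∧ v ∈ S

section Walks

variable {A : V → V → Prop} {S : Set V} {u v w x : V} {p l₁ l₂ : List V}

theorem IsWalk.singleton (A : V → V → Prop) (u : V) : IsWalk A u u [u] :=
  ⟨List.isChain_singleton u, rfl, rfl⟩

theorem IsWalk.cons (h : IsWalk A v w p) (huv : A u v) : IsWalk A u w (u :: p) := by
  obtain ⟨hchain, hhead, hlast⟩ := h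
  refine ⟨hchain.cons fun y hy => ?_, rfl, ?_⟩
  · obtain rfl : v = y := Option.some.inj (hhead.symm.trans hy)
    exact huv
  · rw [List.getLast?_cons, hlast, Option.getD_some]

theorem IsWalk.of_append_cons (h : IsWalk A u v (l₁ ++ x :: l₂)) : IsWalk A x v (x :: l₂) :=
  ⟨h.1.right_of_append, rfl, (List.getLast?_append_cons l₁ x l₂).symm.trans h.2.2⟩

theorem IsWalk.reflTransGen_arcInto (h : IsWalk A u v p) :
    Relation.ReflTransGen (ArcInto A {x | x ∈ p}) u v := by
  obtain ⟨hchain, hhead, hlast⟩ := h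
  obtain ⟨t, rfl⟩ := List.head?_eq_some_iff.mp hhead
  exact List.relationReflTransGen_of_exists_isChain_cons t
    (hchain.imp_of_mem_imp fun _ _ _ hb hab => ⟨hab, hb⟩)
    (List.getLast_of_getLast?_eq_some hlast)

theorem exists_isWalk_nodup_of_reflTransGen_arcInto
    (h : Relation.ReflTransGen (ArcInto A S) u v) (hu : u ∈ S) :
    ∃ q : List V, IsWalk A u v q ∧ q.Nodup ∧ ∀ x ∈ q, x ∈ S := by
  induction h using Relation.ReflTransGen.head_induction_on with
  | refl => exact ⟨[v], .singleton A v, List.nodup_singleton v, List.forall_mem_singleton.mpr hu⟩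
  | @head u w huw _ ih =>
    obtain ⟨q, hq, hnodup, hqS⟩ := ih huw.2
    by_cases huq : u ∈ q
    · obtain ⟨l₁, l₂, rfl⟩ := List.append_of_mem huq
      exact ⟨u :: l₂, hq.of_append_cons, hnodup.of_append_right,
        fun x hx => hqS x (List.mem_append_right l₁ hx)⟩
    · exact ⟨u :: q, hq.cons huw.1, hnodup.cons huq, List.forall_mem_cons.mpr ⟨hu, hqS⟩⟩

end Walks

namespace ParentTree

variable {T : ParentTree V} {x y z : V}

theorem Anc.refl (T : ParentTree V) (x : V) : T.Anc x x :=
  ⟨0, rfl⟩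

theorem Anc.trans (hxy : T.Anc x y) (hyz : T.Anc y z) : T.Anc x z := by
  obtain ⟨m, rfl⟩ := hxy
  obtain ⟨n, rfl⟩ := hyz
  exact ⟨m + n, Function.iterate_add_apply T.parent m n z⟩

theorem Anc.eq_root (h : T.Anc x T.root) : x = T.root := by
  obtain ⟨n, rfl⟩ := h
  exact Function.iterate_fixed T.parent_root n

theorem Anc.eq_or_anc_parent (h : T.Anc x y) : x = y ∨ T.Anc x (T.parent y) := by
  obtain ⟨_ | n, rfl⟩ := h
  · exact .inl rfl
  · exact .inr ⟨n, rfl⟩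

theorem Anc.eq_or_exists_child_anc (h : T.Anc x y) :
    x = y ∨ ∃ a, a ≠ T.root ∧ T.parent a = x ∧ T.Anc a y := by
  obtain ⟨n, hn⟩ := h
  induction n with
  | zero => exact .inl hn.symm
  | succ n ih =>
    rw [Function.iterate_succ_apply'] at hn
    by_cases hroot : T.parent^[n] y = T.root
    · exact ih (by rw [← hn, hroot, T.parent_root])
    · exact .inr ⟨T.parent^[n] y, hroot, hn, n, rfl⟩

end ParentTree

section DerivedGraph

variable {G : FlowGraph V} {T : ParentTree V} {S : Set V} {a v w : V} {p : List V}

theorem not_derivedArc_start (G : FlowGraph V) (T : ParentTree V) (v : V) :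
    ¬ DerivedArc G T v G.s :=
  fun ⟨u, hus, _⟩ => G.no_enter u hus

theorem ParentProperty.exists_anc_derivedArc (hpp : ParentProperty G T) (hvw : G.A v w)
    (hwv : ¬ T.Anc w v) : ∃ a, T.Anc a v ∧ DerivedArc G T a w := by
  by_cases hv : v = T.parent w
  · exact ⟨v, .refl T v, v, hvw, hwv, .inl ⟨hv, rfl⟩⟩
  · obtain ⟨a, ha, haw, hav⟩ :=
      (hpp v w hvw).eq_or_exists_child_anc.resolve_left (Ne.symm hv)
    exact ⟨a, hav, v, hvw, hwv, .inr ⟨hv, ha, haw, hav⟩⟩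

theorem ParentProperty.reflTransGen_derivedArc_of_anc (hpp : ParentProperty G T)
    (hroot : T.root = G.s) (h : Relation.ReflTransGen (ArcInto G.A S) G.s v) (ha : T.Anc a v) :
    Relation.ReflTransGen (ArcInto (DerivedArc G T) S) G.s a := by
  induction h generalizing a with
  | refl =>
    obtain rfl : a = G.s := hroot ▸ (hroot ▸ ha : T.Anc a T.root).eq_root
    exact .refl
  | @tail u w _ huw ih =>
    obtain rfl | haw := ha.eq_or_anc_parent
    · by_cases hau : T.Anc a u
      · exact ih hau
      · obtain ⟨b, hbu, hba⟩ := hpp.exists_anc_derivedArc huw.1 hau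
        exact (ih hbu).tail ⟨hba, huw.2⟩
    · exact ih (haw.trans (hpp u w huw.1))

theorem ParentProperty.exists_isWalk_derivedArc (hpp : ParentProperty G T)
    (hroot : T.root = G.s) (hp : IsWalk G.A G.s v p) :
    ∃ q : List V, IsWalk (DerivedArc G T) G.s v q ∧ q.Nodup ∧ ∀ x ∈ q, x ∈ p :=
  exists_isWalk_nodup_of_reflTransGen_arcInto
    (hpp.reflTransGen_derivedArc_of_anc hroot hp.reflTransGen_arcInto (.refl T v))
    (List.mem_of_mem_head? hp.2.1)

end DerivedGraph

theorem stmt9_general (G : FlowGraph V) (T : ParentTree V)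
    (hroot : T.root = G.s) (hpp : ParentProperty G T) :
    (∀ (v : V) (p : List V), IsWalk G.A G.s v p →
      ∃ q : List V, IsWalk (DerivedArc G T) G.s v q ∧ q.Nodup ∧
        ∀ x ∈ q, x ∈ p) ∧
    (∀ v : V, ∃ q : List V, IsWalk (DerivedArc G T) G.s v q) ∧
    (∀ v : V, ¬ DerivedArc G T v G.s) := by
  refine ⟨fun _ _ hp => hpp.exists_isWalk_derivedArc hroot hp, fun v => ?_,
    not_derivedArc_start G T⟩
  obtain ⟨p, hp⟩ := G.reach v
  obtain ⟨q, hq, -⟩ := hpp.exists_isWalk_derivedArc hroot hp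
  exact ⟨q, hq⟩

/-- If `T` has the parent property and `P` is a simple path from `s` to `v` in
`G`, then the derived graph `G'` contains a simple path from `s` to `v` all of
whose vertices lie on `P`. In particular every vertex of `G'` is reachable
from `s` in `G'`, and no arc of `G'` enters `s`, so `G'` is a flow graph with
start vertex `s`. -/
theorem stmt9 [Fintype V] (G : FlowGraph V) (T : ParentTree V)
    (hroot : T.root = G.s) (hpp : ParentProperty G T) :
    (∀ (v : V) (p : List V), IsWalk G.A G.s v p → p.Nodup →
      ∃ q : List V, IsWalk (DerivedArc G T) G.s v q ∧ q.Nodup ∧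
        ∀ x ∈ q, x ∈ p) ∧
    (∀ v : V, ∃ q : List V, IsWalk (DerivedArc G T) G.s v q) ∧
    (∀ v : V, ¬ DerivedArc G T v G.s) := by
  obtain ⟨hsimple, hreach, henter⟩ := stmt9_general G T hroot hpp
  exact ⟨fun v p hp _ => hsimple v p hp, hreach, henter⟩
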